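/- Let a > 0, λ ∈ ℂ \ [1,+∞), κ := √(1−λ) (principal branch, so Re κ > 0), and c ∈ ℂ. Suppose v : ℝ² → ℂ is continuous on the closed strip {(x₁,x₂) : 0 ≤ x₂ ≤ π}, smooth with continuous gradient on this closed strip away from the two points (±a,0), with v and its gradient square-integrable over the open strip Π⁺ = {0 < x₂ < π}; Δv + λv = 0 on Π⁺; v(x₁,π) = 0 for all x₁ and v(x₁,0) = 0 for |x₁| ≥ a; v and its gradient are bounded on {x₁ ≤ 0} ∩ {0 ≤ x₂ ≤ π}; and there are C > 0, ε > 0 such that for x₁ ≥ a + 1 and 0 ≤ x₂ ≤ π both |v(x₁,x₂) − c·e^{−κ x₁}·sin x₂| and the norm of the gradient of (v − c·e^{−κ x₁} sin x₂) are bounded by C·e^{−(Re κ + ε)·x₁}. Assume additionally that |v·∇v| is integrable over Π⁺ and that the flux of v·∇v through small circles centred at (±a,0) tends to 0 with the radius. Then π·κ·c = ∫_{−a}^{a} v(t,0)·e^{κ t} dt. -/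

import Mathlib

/-!
The formula is Green's identity for `v` and `w = e^{κx₁} sin x₂`: since `κ² = 1 - lam`, both satisfy
the same Helmholtz equation, so `w∇v - v∇w` is divergence free. Its flux through the bottom edge is
`∫ v e^{κt} dt`, through a far right vertical line it is `-2κc ∫₀^π sin² = -πκc` up to an
exponentially small error, and through a far left one it decays because `Re κ > 0`.

No regularity of `∇v` at the edges of the channel or at the points `(±a, 0)` enters, because the
identity is applied in the thinner channel `δ < x₂ < π - δ` with the weight
`e^{κx₁} sin (m(x₂ - δ))`, `m = π/(π - 2δ)`, which vanishes on both of its edges (`green_rect`).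
The edges then contribute only values of `v`, and continuity of `v` on the closed strip gives the
limit `δ → 0⁺`. The price is a bulk term `(m² - 1) ∫∫ v w`, which tends to `0`
(`norm_sub_window_le`). The vertical lines are sent to infinity afterwards.
-/

open MeasureTheory Set Filter

noncomputable section

/-- Principal branch of the complex square root (analytic off `(-∞,0]`, `√1 = 1`). -/
def csqrt (z : ℂ) : ℂ := z ^ (1/2 : ℂ)

/-- The Laplacian of a function on `ℝ²`. -/
def lap (f : ℝ × ℝ → ℂ) (p : ℝ × ℝ) : ℂ :=
  fderiv ℝ (fun q => fderiv ℝ f q (1, 0)) p (1, 0) +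
  fderiv ℝ (fun q => fderiv ℝ f q (0, 1)) p (0, 1)

/-- The upper channel `Π⁺ = {0 < x₂ < π}`. -/
def Pplus : Set (ℝ × ℝ) := {p : ℝ × ℝ | 0 < p.2 ∧ p.2 < Real.pi}

/-! ### The principal square root -/

lemma csqrt_sq (z : ℂ) : csqrt z ^ 2 = z := by
  simp [csqrt]

lemma csqrt_re_pos {z : ℂ} (hz : z ≠ 0) (harg : z.arg ≠ Real.pi) : 0 < (csqrt z).re := by
  have h1 := Complex.neg_pi_lt_arg z
  have h2 := lt_of_le_of_ne (Complex.arg_le_pi z) harg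
  have him : (Complex.log z * (1 / 2)).im = z.arg / 2 := by
    simp [Complex.mul_im, Complex.log_im]; ring
  rw [csqrt, Complex.cpow_def_of_ne_zero hz, Complex.exp_re, him]
  exact mul_pos (Real.exp_pos _) (Real.cos_pos_of_mem_Ioo ⟨by linarith, by linarith⟩)

/-! ### Green's identity in a thinner channel -/

lemma isOpen_Pplus : IsOpen Pplus :=
  (isOpen_lt continuous_const continuous_snd).inter (isOpen_lt continuous_snd continuous_const)

/-- The weight `e^{κx₁} sin (m(x₂ - δ))`. When `m(π - 2δ) = π` it vanishes on both edges of the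
thinner channel `δ < x₂ < π - δ`. -/
def wt (κ : ℂ) (m δ : ℝ) (p : ℝ × ℝ) : ℂ :=
  Complex.exp (κ * (p.1 : ℂ)) * Complex.sin ((m * (p.2 - δ) : ℝ) : ℂ)

/-- The `x₂`-derivative of `wt κ m δ`, namely `e^{κx₁} m cos (m(x₂ - δ))`. -/
def wtY (κ : ℂ) (m δ : ℝ) (p : ℝ × ℝ) : ℂ :=
  Complex.exp (κ * (p.1 : ℂ)) * (m * Complex.cos ((m * (p.2 - δ) : ℝ) : ℂ))

lemma hasDerivAt_weight_exp (κ : ℂ) (x : ℝ) :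
    HasDerivAt (fun x : ℝ => Complex.exp (κ * (x : ℂ))) (Complex.exp (κ * (x : ℂ)) * κ) x := by
  have h : HasDerivAt (fun x : ℝ => κ * (x : ℂ)) κ x := by
    simpa using (Complex.ofRealCLM.hasDerivAt (x := x)).const_mul κ
  exact h.cexp

lemma hasDerivAt_arg (m δ y : ℝ) :
    HasDerivAt (fun y : ℝ => ((m * (y - δ) : ℝ) : ℂ)) (m : ℂ) y := by
  have h : HasDerivAt (fun y : ℝ => m * (y - δ)) m y := by
    simpa using ((hasDerivAt_id y).sub_const δ).const_mul m
  exact h.ofReal_comp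

lemma hasDerivAt_weight_sin (m δ y : ℝ) :
    HasDerivAt (fun y : ℝ => Complex.sin ((m * (y - δ) : ℝ) : ℂ))
      (Complex.cos ((m * (y - δ) : ℝ) : ℂ) * m) y :=
  (Complex.hasDerivAt_sin _).comp y (hasDerivAt_arg m δ y)

lemma hasDerivAt_weight_cos (m δ y : ℝ) :
    HasDerivAt (fun y : ℝ => (m : ℂ) * Complex.cos ((m * (y - δ) : ℝ) : ℂ))
      (m * (-Complex.sin ((m * (y - δ) : ℝ) : ℂ) * m)) y :=
  ((Complex.hasDerivAt_cos _).comp y (hasDerivAt_arg m δ y)).const_mul (m : ℂ)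

lemma wt_hasFDerivAt (κ : ℂ) (m δ : ℝ) (p : ℝ × ℝ) :
    ∃ W : ℝ × ℝ →L[ℝ] ℂ, HasFDerivAt (wt κ m δ) W p ∧
      W (1, 0) = κ * wt κ m δ p ∧ W (0, 1) = wtY κ m δ p := by
  have h1 := (hasDerivAt_weight_exp κ p.1).hasFDerivAt.comp p
    (hasFDerivAt_fst (𝕜 := ℝ) (E := ℝ) (F := ℝ))
  have h2 := (hasDerivAt_weight_sin m δ p.2).hasFDerivAt.comp p
    (hasFDerivAt_snd (𝕜 := ℝ) (E := ℝ) (F := ℝ))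
  refine ⟨_, h1.mul h2, ?_, ?_⟩ <;> simp [wt, wtY] <;> ring

lemma wtY_hasFDerivAt (κ : ℂ) (m δ : ℝ) (p : ℝ × ℝ) :
    ∃ W : ℝ × ℝ →L[ℝ] ℂ, HasFDerivAt (wtY κ m δ) W p ∧
      W (0, 1) = -(m : ℂ) ^ 2 * wt κ m δ p := by
  have h1 := (hasDerivAt_weight_exp κ p.1).hasFDerivAt.comp p
    (hasFDerivAt_fst (𝕜 := ℝ) (E := ℝ) (F := ℝ))
  have h2 := (hasDerivAt_weight_cos m δ p.2).hasFDerivAt.comp p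
    (hasFDerivAt_snd (𝕜 := ℝ) (E := ℝ) (F := ℝ))
  refine ⟨_, h1.mul h2, ?_⟩
  simp [wt]; ring

/-- First component `w ∂₁v - v ∂₁w = (∂₁v - κv) w` of the Green vector field `w∇v - v∇w`,
with `w = wt κ m δ`. -/
def fluxX (v : ℝ × ℝ → ℂ) (κ : ℂ) (m δ : ℝ) (p : ℝ × ℝ) : ℂ :=
  (fderiv ℝ v p (1, 0) - κ * v p) * wt κ m δ p

/-- Second component `w ∂₂v - v ∂₂w` of the Green vector field, with `w = wt κ m δ`. -/
def fluxY (v : ℝ × ℝ → ℂ) (κ : ℂ) (m δ : ℝ) (p : ℝ × ℝ) : ℂ :=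
  fderiv ℝ v p (0, 1) * wt κ m δ p - v p * wtY κ m δ p

lemma differentiableAt_partial {v : ℝ × ℝ → ℂ} (hs : ContDiffOn ℝ (⊤ : ℕ∞) v Pplus)
    {p : ℝ × ℝ} (hp : p ∈ Pplus) (e : ℝ × ℝ) :
    DifferentiableAt ℝ (fun q => fderiv ℝ v q e) p := by
  have h1 : ContDiffAt ℝ (⊤ : ℕ∞) v p := hs.contDiffAt (isOpen_Pplus.mem_nhds hp)
  have h2 : DifferentiableAt ℝ (fderiv ℝ v) p :=
    (h1.fderiv_right (m := (⊤ : ℕ∞)) (by simp)).differentiableAt (by simp)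
  exact h2.clm_apply (differentiableAt_const e)

/-- Since `Δw = (κ² - m²) w` and `Δv = -lam v`, the divergence of the Green field is
`(m² - lam - κ²) v w = (m² - 1) v w`. -/
lemma flux_hasFDerivAt {v : ℝ × ℝ → ℂ} (hs : ContDiffOn ℝ (⊤ : ℕ∞) v Pplus)
    {lam κ : ℂ} (hκ2 : κ ^ 2 = 1 - lam)
    (hHelm : ∀ p ∈ Pplus, lap v p + lam * v p = 0) (m δ : ℝ) {p : ℝ × ℝ} (hp : p ∈ Pplus) :
    ∃ F G : ℝ × ℝ →L[ℝ] ℂ, HasFDerivAt (fluxX v κ m δ) F p ∧ HasFDerivAt (fluxY v κ m δ) G p ∧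
      F (1, 0) + G (0, 1) = ((m : ℂ) ^ 2 - 1) * (v p * wt κ m δ p) := by
  have hv : HasFDerivAt v (fderiv ℝ v p) p :=
    ((hs.contDiffAt (isOpen_Pplus.mem_nhds hp)).differentiableAt (by simp)).hasFDerivAt
  have hx := (differentiableAt_partial hs hp (1, 0)).hasFDerivAt
  have hy := (differentiableAt_partial hs hp (0, 1)).hasFDerivAt
  obtain ⟨W, hW, hW1, hW2⟩ := wt_hasFDerivAt κ m δ p
  obtain ⟨V, hV, hV2⟩ := wtY_hasFDerivAt κ m δ p
  refine ⟨_, _, (hx.sub (hv.const_mul κ)).mul hW, (hy.mul hW).sub (hv.mul hV), ?_⟩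
  have hH := hHelm p hp
  unfold lap at hH
  simp only [add_apply, sub_apply, smul_apply, smul_eq_mul, hW1, hW2, hV2, Pi.sub_apply]
  linear_combination wt κ m δ p * hH - v p * wt κ m δ p * hκ2

lemma continuous_wt (κ : ℂ) (m δ : ℝ) : Continuous (wt κ m δ) := by
  unfold wt; fun_prop

/-- Green's identity on the rectangle with corners `(X, δ)` and `(Y, π - δ)`, whose horizontal edges
lie inside the open channel. As the weight vanishes on these edges, they contribute only values
of `v`, never of its gradient. -/
lemma green_rect {v : ℝ × ℝ → ℂ} (hs : ContDiffOn ℝ (⊤ : ℕ∞) v Pplus)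
    {lam κ : ℂ} (hκ2 : κ ^ 2 = 1 - lam)
    (hHelm : ∀ p ∈ Pplus, lap v p + lam * v p = 0) {m δ : ℝ} (hδ : 0 < δ) (hδ' : δ < Real.pi / 2)
    (hm : m * (Real.pi - 2 * δ) = Real.pi) (X Y : ℝ) :
    (∫ x in X..Y, ∫ y in δ..Real.pi - δ, ((m : ℂ) ^ 2 - 1) * (v (x, y) * wt κ m δ (x, y))) =
      m * ((∫ x in X..Y, v (x, Real.pi - δ) * Complex.exp (κ * x)) +
        ∫ x in X..Y, v (x, δ) * Complex.exp (κ * x)) +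
      (∫ y in δ..Real.pi - δ, fluxX v κ m δ (Y, y)) -
      ∫ y in δ..Real.pi - δ, fluxX v κ m δ (X, y) := by
  have hle : δ ≤ Real.pi - δ := by linarith
  have hsub : uIcc X Y ×ˢ uIcc δ (Real.pi - δ) ⊆ Pplus := by
    rintro ⟨x, y⟩ ⟨-, hy⟩
    rw [uIcc_of_le hle] at hy
    exact ⟨lt_of_lt_of_le hδ hy.1, lt_of_le_of_lt hy.2 (by simpa using hδ)⟩
  have hsub' : ∀ p ∈ Ioo (min X Y) (max X Y) ×ˢ
      Ioo (min δ (Real.pi - δ)) (max δ (Real.pi - δ)) \ (∅ : Set (ℝ × ℝ)), p ∈ Pplus := by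
    rintro p ⟨⟨h1, h2⟩, -⟩
    exact hsub ⟨Ioo_subset_Icc_self h1, Ioo_subset_Icc_self h2⟩
  have key : ∀ p : ℝ × ℝ, p ∈ Pplus → HasFDerivAt (fluxX v κ m δ) (fderiv ℝ (fluxX v κ m δ) p) p ∧
      HasFDerivAt (fluxY v κ m δ) (fderiv ℝ (fluxY v κ m δ) p) p ∧
      fderiv ℝ (fluxX v κ m δ) p (1, 0) + fderiv ℝ (fluxY v κ m δ) p (0, 1) =
        ((m : ℂ) ^ 2 - 1) * (v p * wt κ m δ p) := by
    intro p hp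
    obtain ⟨F, G, hF, hG, h⟩ := flux_hasFDerivAt hs hκ2 hHelm m δ hp
    exact ⟨hF.differentiableAt.hasFDerivAt, hG.differentiableAt.hasFDerivAt,
      by rw [hF.fderiv, hG.fderiv, h]⟩
  have hI := integral2_divergence_prod_of_hasFDerivAt_off_countable (fluxX v κ m δ) (fluxY v κ m δ)
    (fderiv ℝ (fluxX v κ m δ)) (fderiv ℝ (fluxY v κ m δ)) X δ Y (Real.pi - δ) ∅ countable_empty
    (fun p hp => (key p (hsub hp)).1.continuousAt.continuousWithinAt)
    (fun p hp => (key p (hsub hp)).2.1.continuousAt.continuousWithinAt)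
    (fun p hp => (key p (hsub' p hp)).1) (fun p hp => (key p (hsub' p hp)).2.1)
    (by
      have hc : ContinuousOn (fun p => ((m : ℂ) ^ 2 - 1) * (v p * wt κ m δ p))
          (uIcc X Y ×ˢ uIcc δ (Real.pi - δ)) :=
        continuousOn_const.mul ((hs.continuousOn.mono hsub).mul (continuous_wt κ m δ).continuousOn)
      refine (hc.integrableOn_compact (isCompact_uIcc.prod isCompact_uIcc)).congr_fun
        (fun p hp => ((key p (hsub hp)).2.2).symm) ?_
      exact (measurableSet_uIcc.prod measurableSet_uIcc))
  have hL : (∫ x in X..Y, ∫ y in δ..Real.pi - δ, fderiv ℝ (fluxX v κ m δ) (x, y) (1, 0) +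
      fderiv ℝ (fluxY v κ m δ) (x, y) (0, 1)) =
      ∫ x in X..Y, ∫ y in δ..Real.pi - δ, ((m : ℂ) ^ 2 - 1) * (v (x, y) * wt κ m δ (x, y)) := by
    refine intervalIntegral.integral_congr fun x hx => intervalIntegral.integral_congr fun y hy => ?_
    exact (key (x, y) (hsub ⟨hx, hy⟩)).2.2
  have htop : ∀ x : ℝ, fluxY v κ m δ (x, Real.pi - δ) =
      m * (v (x, Real.pi - δ) * Complex.exp (κ * x)) := by
    intro x
    have : m * (Real.pi - δ - δ) = Real.pi := by linear_combination hm
    simp only [fluxY, wt, wtY, this]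
    simp; ring
  have hbot : ∀ x : ℝ, fluxY v κ m δ (x, δ) = -(m * (v (x, δ) * Complex.exp (κ * x))) := by
    intro x
    simp [fluxY, wt, wtY]; ring
  rw [← hL, hI]
  simp only [htop, hbot, intervalIntegral.integral_neg, intervalIntegral.integral_const_mul]
  ring

/-! ### Flux through the vertical lines -/

lemma norm_wt_le (κ : ℂ) (m δ : ℝ) (p : ℝ × ℝ) : ‖wt κ m δ p‖ ≤ Real.exp (κ.re * p.1) := by
  have h1 : ‖Complex.exp (κ * (p.1 : ℂ))‖ = Real.exp (κ.re * p.1) := by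
    rw [Complex.norm_exp]; simp
  have h2 : ‖Complex.sin ((m * (p.2 - δ) : ℝ) : ℂ)‖ ≤ 1 := by
    rw [← Complex.ofReal_sin, Complex.norm_real]
    exact Real.abs_sin_le_one _
  rw [wt, norm_mul, h1]
  exact mul_le_of_le_one_right (Real.exp_pos _).le h2

lemma norm_apply_e1_le (L : ℝ × ℝ →L[ℝ] ℂ) : ‖L (1, 0)‖ ≤ ‖L‖ := by
  simpa [Prod.norm_def] using L.le_opNorm (1, 0)

lemma norm_integral_cut_le {h : ℝ → ℂ} {δ K : ℝ} (hδ : 0 < δ) (hδ' : δ < Real.pi / 2)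
    (hK : 0 ≤ K) (hh : ∀ y, 0 < y → y < Real.pi → ‖h y‖ ≤ K) :
    ‖∫ y in δ..Real.pi - δ, h y‖ ≤ K * Real.pi := by
  refine (intervalIntegral.norm_integral_le_of_norm_le_const (C := K) fun y hy => ?_).trans ?_
  · rw [uIoc_of_le (by linarith)] at hy
    exact hh y (hδ.trans hy.1) (by linarith [hy.2])
  · rw [abs_of_nonneg (by linarith)]
    gcongr
    linarith

/-- Bound for the horizontal flux at a point where `v` and its gradient are bounded by `M`. -/
lemma norm_fluxX_left_le {v : ℝ × ℝ → ℂ} (κ : ℂ) (m δ : ℝ) {M : ℝ} {p : ℝ × ℝ}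
    (h0 : ‖v p‖ ≤ M) (h1 : ‖fderiv ℝ v p‖ ≤ M) :
    ‖fluxX v κ m δ p‖ ≤ (1 + ‖κ‖) * M * Real.exp (κ.re * p.1) := by
  rw [fluxX, norm_mul]
  have hM : 0 ≤ M := (norm_nonneg _).trans h0
  have : ‖fderiv ℝ v p (1, 0) - κ * v p‖ ≤ (1 + ‖κ‖) * M := by
    refine (norm_sub_le _ _).trans ?_
    rw [norm_mul, one_add_mul]
    exact add_le_add ((norm_apply_e1_le _).trans h1) (by gcongr)
  exact mul_le_mul this (norm_wt_le κ m δ p) (norm_nonneg _) (by positivity)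

/-- On a vertical line where `v` and its gradient are `B`-close to those of the mode
`c e^{-κx₁} sin x₂`, the flux `fluxX v` is that of the mode, `-2κc sin x₂ sin (m(x₂ - δ))`, up to an
error controlled by `B`: the remainder is the flux of the difference. -/
lemma norm_fluxX_right_le {v : ℝ × ℝ → ℂ} (κ c : ℂ) (m δ : ℝ) {B : ℝ} {p : ℝ × ℝ}
    (hv : DifferentiableAt ℝ v p)
    (h0 : ‖v p - c * Complex.exp (-κ * (p.1 : ℂ)) * Complex.sin (p.2 : ℂ)‖ ≤ B)
    (h1 : ‖fderiv ℝ (fun p : ℝ × ℝ =>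
          v p - c * Complex.exp (-κ * (p.1 : ℂ)) * Complex.sin (p.2 : ℂ)) p‖ ≤ B) :
    ‖fluxX v κ m δ p + 2 * κ * c *
      (Complex.sin (p.2 : ℂ) * Complex.sin ((m * (p.2 - δ) : ℝ) : ℂ))‖ ≤
      (1 + ‖κ‖) * B * Real.exp (κ.re * p.1) := by
  obtain ⟨W, hW, hW1, -⟩ := wt_hasFDerivAt (-κ) 1 0 p
  have hfun : (fun p : ℝ × ℝ =>
      v p - c * Complex.exp (-κ * (p.1 : ℂ)) * Complex.sin (p.2 : ℂ)) =
      fun p => v p - c * wt (-κ) 1 0 p := by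
    funext q; simp [wt]; ring
  have hval : v p - c * Complex.exp (-κ * (p.1 : ℂ)) * Complex.sin (p.2 : ℂ) =
      v p - c * wt (-κ) 1 0 p := congrFun hfun p
  rw [hfun] at h1
  rw [hval] at h0
  have hd : HasFDerivAt (fun p => v p - c * wt (-κ) 1 0 p) (fderiv ℝ v p - c • W) p :=
    hv.hasFDerivAt.sub (hW.const_mul c)
  have h0' := norm_fluxX_left_le (v := fun p => v p - c * wt (-κ) 1 0 p) κ m δ h0 h1
  convert h0' using 2
  have hee : Complex.exp (-κ * (p.1 : ℂ)) * Complex.exp (κ * (p.1 : ℂ)) = 1 := by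
    rw [← Complex.exp_add]; simp
  simp only [fluxX, hd.fderiv, sub_apply, smul_apply, hW1, smul_eq_mul]
  simp only [wt, one_mul, sub_zero]
  linear_combination (-2 * κ * c * Complex.sin (p.2 : ℂ) *
    Complex.sin ((m * (p.2 - δ) : ℝ) : ℂ)) * hee

/-! ### The limit of thinner channels -/

/-- The overlap of `sin` with the sine adapted to `(δ, π - δ)` tends to `∫₀^π sin² = π/2`. -/
lemma tendsto_overlap :
    Tendsto (fun δ : ℝ => ∫ y in δ..Real.pi - δ, Complex.sin (y : ℂ) *
      Complex.sin ((Real.pi / (Real.pi - 2 * δ) * (y - δ) : ℝ) : ℂ))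
      (nhdsWithin 0 (Ioi 0)) (nhds (Real.pi / 2)) := by
  have hpi := Real.pi_pos
  -- The substitution `y = δ + s u` makes the domain of integration independent of `δ`.
  set s : ℝ → ℝ := fun δ => (Real.pi - 2 * δ) / Real.pi with hs
  have hcs : Continuous s := by fun_prop
  have hc : Continuous fun δ : ℝ => s δ • ∫ u in (0 : ℝ)..Real.pi,
      Complex.sin ((δ + s δ * u : ℝ) : ℂ) * Complex.sin (u : ℂ) := by
    refine hcs.smul (intervalIntegral.continuous_parametric_intervalIntegral_of_continuous'
      (f := fun δ u : ℝ => Complex.sin ((δ + s δ * u : ℝ) : ℂ) * Complex.sin (u : ℂ)) ?_ _ _)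
    simp only [Function.uncurry_def]
    fun_prop
  have h0 : s 0 = 1 := by simp [hs, hpi.ne']
  have hval : (s 0 • ∫ u in (0 : ℝ)..Real.pi,
      Complex.sin ((0 + s 0 * u : ℝ) : ℂ) * Complex.sin (u : ℂ)) = (Real.pi : ℂ) / 2 := by
    have : (∫ u in (0 : ℝ)..Real.pi, Complex.sin (u : ℂ) * Complex.sin (u : ℂ)) =
        ((∫ u in (0 : ℝ)..Real.pi, Real.sin u ^ 2 : ℝ) : ℂ) := by
      rw [← intervalIntegral.integral_ofReal]
      congr 1; funext u; push_cast; ring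
    rw [h0]
    simp only [zero_add, one_mul, one_smul]
    rw [this, integral_sin_sq]; simp
  have ht := (hc.tendsto 0).mono_left (nhdsWithin_le_nhds (s := Ioi 0))
  rw [hval] at ht
  refine ht.congr' ?_
  filter_upwards [Ioo_mem_nhdsGT (show (0 : ℝ) < Real.pi / 2 by linarith)] with δ hδ
  have hne : Real.pi - 2 * δ ≠ 0 := by linarith [hδ.2]
  have := intervalIntegral.smul_integral_comp_add_mul (a := 0) (b := Real.pi)
    (fun y : ℝ => Complex.sin (y : ℂ) *
      Complex.sin ((Real.pi / (Real.pi - 2 * δ) * (y - δ) : ℝ) : ℂ)) (s δ) δ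
  rw [show δ + s δ * 0 = δ by ring,
    show δ + s δ * Real.pi = Real.pi - δ by simp only [hs]; field_simp; ring] at this
  rw [← this]
  congr 2; funext u
  rw [show Real.pi / (Real.pi - 2 * δ) * (δ + s δ * u - δ) = u by
    simp only [hs]; field_simp; ring]

/-- A function continuous on the closed strip agrees there with a continuous function on the plane;
this makes horizontal trace integrals continuous in the height. -/
lemma exists_continuous_extension {v : ℝ × ℝ → ℂ}
    (hcont : ContinuousOn v {p : ℝ × ℝ | 0 ≤ p.2 ∧ p.2 ≤ Real.pi}) :
    ∃ w : ℝ × ℝ → ℂ, Continuous w ∧ ∀ x y : ℝ, 0 ≤ y → y ≤ Real.pi → w (x, y) = v (x, y) := by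
  refine ⟨fun p => v (p.1, max 0 (min p.2 Real.pi)), ?_, fun x y h0 h1 => by simp [h0, h1]⟩
  refine hcont.comp_continuous (by fun_prop) fun p => ⟨le_max_left _ _, ?_⟩
  exact max_le Real.pi_pos.le (min_le_right _ _)

/-- The coefficient formula between two vertical lines `x₁ = X` and `x₁ = Y`, with error terms
coming from the flux through each: the limit `δ → 0⁺` of `green_rect`. -/
lemma norm_sub_window_le {v : ℝ × ℝ → ℂ}
    (hcont : ContinuousOn v {p : ℝ × ℝ | 0 ≤ p.2 ∧ p.2 ≤ Real.pi})
    (hs : ContDiffOn ℝ (⊤ : ℕ∞) v Pplus)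
    {lam κ : ℂ} (c : ℂ) (hκ2 : κ ^ 2 = 1 - lam)
    (hHelm : ∀ p ∈ Pplus, lap v p + lam * v p = 0)
    (htop : ∀ x₁ : ℝ, v (x₁, Real.pi) = 0) {X Y M B : ℝ}
    (hX : ∀ y : ℝ, 0 < y → y < Real.pi → ‖v (X, y)‖ ≤ M ∧ ‖fderiv ℝ v (X, y)‖ ≤ M)
    (hY : ∀ y : ℝ, 0 < y → y < Real.pi →
      ‖v (Y, y) - c * Complex.exp (-κ * (Y : ℂ)) * Complex.sin (y : ℂ)‖ ≤ B ∧
      ‖fderiv ℝ (fun p : ℝ × ℝ =>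
          v p - c * Complex.exp (-κ * (p.1 : ℂ)) * Complex.sin (p.2 : ℂ)) (Y, y)‖ ≤ B) :
    ‖(Real.pi : ℂ) * κ * c - ∫ t in X..Y, v (t, 0) * Complex.exp (κ * (t : ℂ))‖ ≤
      (1 + ‖κ‖) * B * Real.exp (κ.re * Y) * Real.pi +
        (1 + ‖κ‖) * M * Real.exp (κ.re * X) * Real.pi := by
  have hpi := Real.pi_pos
  obtain ⟨w, hwc, hw⟩ := exists_continuous_extension hcont
  have hM : 0 ≤ M := (norm_nonneg _).trans (hX (Real.pi / 2) (by linarith) (by linarith)).1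
  have hB : 0 ≤ B := (norm_nonneg _).trans (hY (Real.pi / 2) (by linarith) (by linarith)).1
  set T : ℝ → ℂ := fun y => ∫ t in X..Y, w (t, y) * Complex.exp (κ * (t : ℂ)) with hT
  have hTc : Continuous T := by
    refine intervalIntegral.continuous_parametric_intervalIntegral_of_continuous'
      (f := fun y t : ℝ => w (t, y) * Complex.exp (κ * (t : ℂ))) ?_ _ _
    simp only [Function.uncurry_def]
    fun_prop
  have hTv : ∀ y, 0 ≤ y → y ≤ Real.pi →
      T y = ∫ t in X..Y, v (t, y) * Complex.exp (κ * (t : ℂ)) := by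
    intro y h0 h1
    simp only [hT, hw _ y h0 h1]
  have hTpi : T Real.pi = 0 := by
    rw [hTv _ hpi.le le_rfl]; simp [htop]
  obtain ⟨K, hK⟩ := (isCompact_uIcc.prod isCompact_uIcc : IsCompact
    (uIcc X Y ×ˢ uIcc 0 Real.pi)).exists_bound_of_continuousOn
      (f := fun p : ℝ × ℝ => w p * (Real.exp (κ.re * p.1) : ℂ))
      (by fun_prop)
  have hK0 : 0 ≤ K := (norm_nonneg _).trans (hK (X, 0) ⟨left_mem_uIcc, left_mem_uIcc⟩)
  set μ : ℝ → ℝ := fun δ => Real.pi / (Real.pi - 2 * δ) with hμ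
  have hμt : Tendsto μ (nhdsWithin 0 (Ioi 0)) (nhds 1) := by
    have : ContinuousAt μ 0 :=
      continuousAt_const.div (by fun_prop) (by simp [hpi.ne'])
    have h := this.tendsto.mono_left (nhdsWithin_le_nhds (s := Ioi 0))
    simpa [hμ, hpi.ne'] using h
  have hμt' : Tendsto (fun δ => (μ δ : ℂ)) (nhdsWithin 0 (Ioi 0)) (nhds 1) := by
    have h := (Complex.continuous_ofReal.tendsto 1).comp hμt
    rwa [Complex.ofReal_one] at h
  -- The bulk term carries the factor `μ² - 1 → 0`, and `v w` is bounded uniformly in `δ`.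
  set D : ℝ → ℂ := fun δ => ∫ x in X..Y, ∫ y in δ..Real.pi - δ,
    ((μ δ : ℂ) ^ 2 - 1) * (v (x, y) * wt κ (μ δ) δ (x, y)) with hD
  have hev : ∀ᶠ δ in nhdsWithin (0 : ℝ) (Ioi 0), 0 < δ ∧ δ < Real.pi / 2 :=
    Ioo_mem_nhdsGT (by linarith)
  have hDt : Tendsto D (nhdsWithin 0 (Ioi 0)) (nhds 0) := by
    have h1 : Tendsto (fun δ => ‖(μ δ : ℂ) ^ 2 - 1‖ * K * Real.pi * |Y - X|)
        (nhdsWithin 0 (Ioi 0)) (nhds 0) := by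
      have := (((((hμt'.pow 2).sub_const 1).norm).mul_const K).mul_const Real.pi).mul_const |Y - X|
      simpa using this
    refine squeeze_zero_norm' ?_ h1
    filter_upwards [hev] with δ hδ
    refine intervalIntegral.norm_integral_le_of_norm_le_const fun x hx => ?_
    refine norm_integral_cut_le hδ.1 hδ.2 (by positivity) fun y hy0 hy1 => ?_
    rw [norm_mul]
    gcongr
    have h2 := hK (x, y) ⟨uIoc_subset_uIcc hx, by
      rw [uIcc_of_le hpi.le]; exact ⟨hy0.le, hy1.le⟩⟩
    rw [norm_mul, Complex.norm_real, Real.norm_of_nonneg (Real.exp_pos _).le,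
      hw x y hy0.le hy1.le] at h2
    rw [norm_mul]
    refine le_trans ?_ h2
    gcongr
    exact norm_wt_le κ (μ δ) δ (x, y)
  set S : ℝ → ℂ := fun δ => ∫ y in δ..Real.pi - δ, Complex.sin (y : ℂ) *
      Complex.sin ((μ δ * (y - δ) : ℝ) : ℂ) with hS
  have hSt : Tendsto S (nhdsWithin 0 (Ioi 0)) (nhds (Real.pi / 2)) := tendsto_overlap
  have hT1 : Tendsto (fun δ => T (Real.pi - δ)) (nhdsWithin 0 (Ioi 0)) (nhds 0) := by
    have h : Continuous fun δ => T (Real.pi - δ) := by fun_prop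
    simpa [hTpi] using (h.tendsto 0).mono_left (nhdsWithin_le_nhds (s := Ioi 0))
  have hT0 : Tendsto T (nhdsWithin 0 (Ioi 0)) (nhds (T 0)) :=
    (hTc.tendsto 0).mono_left nhdsWithin_le_nhds
  have hlim : Tendsto (fun δ => ‖2 * κ * c * S δ + D δ - μ δ * (T (Real.pi - δ) + T δ)‖)
      (nhdsWithin 0 (Ioi 0)) (nhds ‖(Real.pi : ℂ) * κ * c - T 0‖) := by
    have := (((hSt.const_mul (2 * κ * c)).add hDt).sub (hμt'.mul (hT1.add hT0))).norm
    have he : 2 * κ * c * ((Real.pi : ℂ) / 2) + 0 - 1 * (0 + T 0) =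
        (Real.pi : ℂ) * κ * c - T 0 := by ring
    rwa [he] at this
  rw [← hTv 0 le_rfl hpi.le]
  refine le_of_tendsto hlim ?_
  filter_upwards [hev] with δ hδ
  have hne : Real.pi - 2 * δ ≠ 0 := by linarith [hδ.2]
  have hG := green_rect hs hκ2 hHelm (m := μ δ) hδ.1 hδ.2
    (by simp only [hμ]; field_simp) X Y
  rw [← hTv _ (by linarith [hδ.2]) (by linarith [hδ.1]), ← hTv _ hδ.1.le (by linarith [hδ.2])] at hG
  have hmem : ∀ y : ℝ, 0 < y → y < Real.pi → (Y, y) ∈ Pplus := fun y h0 h1 => ⟨h0, h1⟩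
  have hint1 : IntervalIntegrable (fun y => fluxX v κ (μ δ) δ (Y, y)) volume δ (Real.pi - δ) := by
    refine ContinuousOn.intervalIntegrable fun y hy => ?_
    rw [uIcc_of_le (by linarith [hδ.2])] at hy
    obtain ⟨F, G, hF, -⟩ := flux_hasFDerivAt hs hκ2 hHelm (μ δ) δ
      (hmem y (by linarith [hδ.1, hy.1]) (by linarith [hδ.1, hy.2]))
    exact (ContinuousAt.comp (f := fun y : ℝ => (Y, y)) hF.continuousAt
      (by fun_prop)).continuousWithinAt
  have hint2 : IntervalIntegrable (fun y : ℝ => 2 * κ * c * (Complex.sin (y : ℂ) *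
      Complex.sin ((μ δ * (y - δ) : ℝ) : ℂ))) volume δ (Real.pi - δ) :=
    Continuous.intervalIntegrable (by fun_prop) _ _
  have hsum : 2 * κ * c * S δ + D δ - μ δ * (T (Real.pi - δ) + T δ) =
      (∫ y in δ..Real.pi - δ, (fluxX v κ (μ δ) δ (Y, y) + 2 * κ * c * (Complex.sin (y : ℂ) *
        Complex.sin ((μ δ * (y - δ) : ℝ) : ℂ)))) -
      ∫ y in δ..Real.pi - δ, fluxX v κ (μ δ) δ (X, y) := by
    rw [intervalIntegral.integral_add hint1 hint2, intervalIntegral.integral_const_mul]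
    simp only [hD, hS]
    rw [hG]; ring
  rw [hsum]
  refine (norm_sub_le _ _).trans (add_le_add ?_ ?_)
  · refine norm_integral_cut_le hδ.1 hδ.2 (by positivity) fun y h0 h1 => ?_
    exact norm_fluxX_right_le κ c (μ δ) δ (p := (Y, y))
      ((hs.contDiffAt (isOpen_Pplus.mem_nhds (hmem y h0 h1))).differentiableAt (by simp))
      (hY y h0 h1).1 (hY y h0 h1).2
  · refine norm_integral_cut_le hδ.1 hδ.2 (by positivity) fun y h0 h1 => ?_
    exact norm_fluxX_left_le κ (μ δ) δ (p := (X, y)) (hX y h0 h1).1 (hX y h0 h1).2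

/-! ### The coefficient formula -/

lemma integral_window {v : ℝ × ℝ → ℂ} {a : ℝ}
    (hcont : ContinuousOn v {p : ℝ × ℝ | 0 ≤ p.2 ∧ p.2 ≤ Real.pi})
    (hwin : ∀ x₁ : ℝ, a ≤ |x₁| → v (x₁, 0) = 0) (κ : ℂ) {n : ℝ} (hn : a ≤ n) :
    (∫ t in -n..n, v (t, 0) * Complex.exp (κ * (t : ℂ))) =
      ∫ t in -a..a, v (t, 0) * Complex.exp (κ * (t : ℂ)) := by
  have hc : Continuous fun t : ℝ => v (t, 0) * Complex.exp (κ * (t : ℂ)) := by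
    have : Continuous fun t : ℝ => v (t, 0) :=
      hcont.comp_continuous (by fun_prop) fun t => ⟨le_rfl, Real.pi_pos.le⟩
    exact this.mul (by fun_prop)
  have hi : ∀ s t : ℝ, IntervalIntegrable (fun t : ℝ => v (t, 0) * Complex.exp (κ * (t : ℂ)))
    volume s t := fun s t => hc.intervalIntegrable s t
  have hz : ∀ s t : ℝ, (∀ x ∈ uIcc s t, a ≤ |x|) →
      (∫ t in s..t, v (t, 0) * Complex.exp (κ * (t : ℂ))) = 0 := by
    intro s t h
    rw [intervalIntegral.integral_congr (g := fun _ => (0 : ℂ))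
      fun x hx => by simp [hwin x (h x hx)]]
    simp
  rw [← intervalIntegral.integral_add_adjacent_intervals (hi (-n) (-a)) (hi (-a) n),
    ← intervalIntegral.integral_add_adjacent_intervals (hi (-a) a) (hi a n),
    hz (-n) (-a), hz a n, zero_add, add_zero]
  · intro x hx
    rw [uIcc_of_le hn] at hx
    exact hx.1.trans (le_abs_self x)
  · intro x hx
    rw [uIcc_of_le (by linarith)] at hx
    exact (by linarith [hx.2] : a ≤ -x).trans (neg_le_abs x)

/-- The coefficient formula (1.5)/(1.10): the leading asymptotic coefficient of a decaying
solution of the Helmholtz equation in the upper channel is expressed, via a Green-type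
identity with the weight `e^{κx₁} sin x₂`, as an integral of the boundary trace over the
window `γ_a`. -/
theorem stmt2
    (a : ℝ) (ha : 0 < a)
    (lam : ℂ) (hlam : ∀ t : ℝ, 1 ≤ t → lam ≠ (t : ℂ))
    (κ : ℂ) (hκ : κ = csqrt (1 - lam))
    (c : ℂ)
    (v : ℝ × ℝ → ℂ)
    (hcont : ContinuousOn v {p : ℝ × ℝ | 0 ≤ p.2 ∧ p.2 ≤ Real.pi})
    (hsmooth : ContDiffOn ℝ (⊤ : ℕ∞) v
      ({p : ℝ × ℝ | 0 ≤ p.2 ∧ p.2 ≤ Real.pi} \ {((a : ℝ), (0 : ℝ)), (-a, 0)}))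
    (hgradcont : ContinuousOn (fun p => fderiv ℝ v p)
      ({p : ℝ × ℝ | 0 ≤ p.2 ∧ p.2 ≤ Real.pi} \ {((a : ℝ), (0 : ℝ)), (-a, 0)}))
    (hL2 : IntegrableOn (fun p => ‖v p‖ ^ 2) Pplus)
    (hL2grad : IntegrableOn (fun p => ‖fderiv ℝ v p‖ ^ 2) Pplus)
    (hHelm : ∀ p ∈ Pplus, lap v p + lam * v p = 0)
    (htop : ∀ x₁ : ℝ, v (x₁, Real.pi) = 0)
    (hwin : ∀ x₁ : ℝ, a ≤ |x₁| → v (x₁, 0) = 0)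
    (hbdd : ∃ M : ℝ, ∀ p : ℝ × ℝ, p.1 ≤ 0 → 0 ≤ p.2 → p.2 ≤ Real.pi →
      ‖v p‖ ≤ M ∧ ‖fderiv ℝ v p‖ ≤ M)
    (C ε : ℝ) (hC : 0 < C) (hε : 0 < ε)
    (hdecay : ∀ x₁ x₂ : ℝ, a + 1 ≤ x₁ → 0 ≤ x₂ → x₂ ≤ Real.pi →
      ‖v (x₁, x₂) - c * Complex.exp (-κ * (x₁ : ℂ)) * Complex.sin (x₂ : ℂ)‖ ≤
        C * Real.exp (-(κ.re + ε) * x₁) ∧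
      ‖fderiv ℝ (fun p : ℝ × ℝ =>
          v p - c * Complex.exp (-κ * (p.1 : ℂ)) * Complex.sin (p.2 : ℂ)) (x₁, x₂)‖ ≤
        C * Real.exp (-(κ.re + ε) * x₁))
    (hint : IntegrableOn (fun p => ‖v p‖ * ‖fderiv ℝ v p‖) Pplus)
    (hflux : ∀ x₀ : ℝ × ℝ, x₀ = ((a : ℝ), (0 : ℝ)) ∨ x₀ = (-a, 0) →
      Tendsto (fun r : ℝ => ∫ θ in (0:ℝ)..Real.pi,
          v (x₀.1 + r * Real.cos θ, x₀.2 + r * Real.sin θ) *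
            (fderiv ℝ v (x₀.1 + r * Real.cos θ, x₀.2 + r * Real.sin θ)
              (Real.cos θ, Real.sin θ)) * (r : ℂ))
        (nhdsWithin 0 (Set.Ioi 0)) (nhds 0)) :
    (Real.pi : ℂ) * κ * c = ∫ t in -a..a, v (t, 0) * Complex.exp (κ * (t : ℂ)) := by
  have hre : 0 < κ.re := by
    rw [hκ]
    refine csqrt_re_pos ?_ ?_
    · intro h
      exact hlam 1 le_rfl (by simpa using (sub_eq_zero.1 h).symm)
    · intro h
      obtain ⟨h1, h2⟩ := Complex.arg_eq_pi_iff.1 h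
      simp only [Complex.sub_re, Complex.one_re, Complex.sub_im, Complex.one_im] at h1 h2
      exact hlam lam.re (by linarith) (Complex.ext (by simp) (by simp; linarith))
  have hκ2 : κ ^ 2 = 1 - lam := by rw [hκ, csqrt_sq]
  have hs : ContDiffOn ℝ (⊤ : ℕ∞) v Pplus := by
    refine hsmooth.mono fun p hp => ⟨⟨hp.1.le, hp.2.le⟩, ?_⟩
    rintro (h | h) <;> exact absurd (congrArg Prod.snd h) hp.1.ne'
  obtain ⟨M, hM⟩ := hbdd
  have key : ∀ n : ℝ, a + 1 ≤ n →
      ‖(Real.pi : ℂ) * κ * c - ∫ t in -a..a, v (t, 0) * Complex.exp (κ * (t : ℂ))‖ ≤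
      (1 + ‖κ‖) * C * Real.pi * Real.exp (-(ε * n)) +
        (1 + ‖κ‖) * M * Real.pi * Real.exp (-(κ.re * n)) := by
    intro n hn
    have h := norm_sub_window_le hcont hs c hκ2 hHelm htop (X := -n) (Y := n)
      (fun y h0 h1 => hM (-n, y) (by simp only; linarith) h0.le h1.le)
      (fun y h0 h1 => hdecay n y hn h0.le h1.le)
    rw [integral_window hcont hwin κ (by linarith)] at h
    have he : Real.exp (-(κ.re + ε) * n) * Real.exp (κ.re * n) = Real.exp (-(ε * n)) := by
      rw [← Real.exp_add]; congr 1; ring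
    rw [mul_neg] at h
    refine h.trans_eq ?_
    rw [← he]; ring
  have hexp : ∀ b : ℝ, 0 < b → Tendsto (fun n : ℝ => Real.exp (-(b * n))) atTop (nhds 0) :=
    fun b hb => Real.tendsto_exp_neg_atTop_nhds_zero.comp (tendsto_id.const_mul_atTop hb)
  have hlim := ((hexp ε hε).const_mul ((1 + ‖κ‖) * C * Real.pi)).add
    ((hexp κ.re hre).const_mul ((1 + ‖κ‖) * M * Real.pi))
  rw [mul_zero, mul_zero, add_zero] at hlim
  have h0 := ge_of_tendsto hlim (eventually_atTop.2 ⟨a + 1, key⟩)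
  exact sub_eq_zero.1 (norm_le_zero_iff.1 h0)

end
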